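/- Let U ⊆ ℂ be an open neighbourhood of 0, let f : U → ℂ be smooth, and let k ∈ ℕ. Suppose that f(z) = O(|z|^k) and ∂_z̄ f(z) = O(|z|^k) as z → 0. Then there exists a ∈ ℂ such that f(z) − a·z^k = O(|z|^{k+1}) as z → 0. (This is the key local step in the proof of Lemma 2.3 (lem:extend): the lowest-order homogeneous part of the component ψ₋ of an eigenspinor at a zero is a holomorphic monomial a z^{k}, which lets the map by eigenspinors to ℂP^{2m−1} extend continuously across common zeroes.) -/

import Mathlib

open Asymptotics Filter

/-- Wirtinger derivative `∂_z̄ f = ½(∂ₓf + i ∂_yf)` of a map `f : ℂ → ℂ`. -/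
noncomputable def wirtZbar (f : ℂ → ℂ) (z : ℂ) : ℂ :=
  (1 / 2 : ℂ) • (fderiv ℝ f z 1 + Complex.I • fderiv ℝ f z Complex.I)

/-- directional derivative -/
noncomputable def dirD (v : ℂ) (f : ℂ → ℂ) (z : ℂ) : ℂ := fderiv ℝ f z v

lemma dirD_contDiff (v : ℂ) {f : ℂ → ℂ} (hf : ContDiff ℝ (⊤ : ℕ∞) f) :
    ContDiff ℝ (⊤ : ℕ∞) (dirD v f) := by
  unfold dirD
  exact (hf.fderiv_right (m := (⊤ : ℕ∞)) (by simp)).clm_apply contDiff_const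

lemma dirD_iter_contDiff (v : ℂ) {f : ℂ → ℂ} (hf : ContDiff ℝ (⊤ : ℕ∞) f) (j : ℕ) :
    ContDiff ℝ (⊤ : ℕ∞) ((dirD v)^[j] f) := by
  induction j with
  | zero => simpa using hf
  | succ j ih => rw [Function.iterate_succ_apply']; exact dirD_contDiff v ih

lemma line_hasDerivAt (v z : ℂ) {f : ℂ → ℂ} (hf : ContDiff ℝ (⊤ : ℕ∞) f) (t : ℝ) :
    HasDerivAt (fun t : ℝ => f (z + t • v)) (dirD v f (z + t • v)) t := by
  have h1 : HasFDerivAt f (fderiv ℝ f (z + t • v)) (z + t • v) :=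
    (hf.differentiable (by simp) _).hasFDerivAt
  have h2 : HasDerivAt (fun t : ℝ => z + t • v) v t := by
    simpa using ((hasDerivAt_id t).smul_const v).const_add z
  exact h1.comp_hasDerivAt t h2

lemma line_iter (v z : ℂ) {f : ℂ → ℂ} (hf : ContDiff ℝ (⊤ : ℕ∞) f) (b : ℝ) (hb : 0 < b) (j : ℕ) :
    ∀ t ∈ Set.Icc 0 b, iteratedDerivWithin j (fun t : ℝ => f (z + t • v)) (Set.Icc 0 b) t
      = ((dirD v)^[j] f) (z + t • v) := by
  induction j with
  | zero => intro t ht; simp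
  | succ j ih =>
    intro t ht
    rw [iteratedDerivWithin_succ, derivWithin_congr ih (ih t ht),
      Function.iterate_succ_apply']
    exact ((line_hasDerivAt v z (dirD_iter_contDiff v hf j) t).hasDerivWithinAt).derivWithin
      (uniqueDiffOn_Icc hb t ht)

lemma weights (k : ℕ) : ∃ w : Fin (k + 2) → ℝ, ∀ j : Fin (k + 2),
    ∑ i : Fin (k + 2), w i * (i : ℝ) ^ (j : ℕ) = if (j : ℕ) = 1 then 1 else 0 := by
  let A : Matrix (Fin (k + 2)) (Fin (k + 2)) ℝ := Matrix.vandermonde fun i => ((i : ℕ) : ℝ)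
  have hA : IsUnit A.det := by
    rw [isUnit_iff_ne_zero]
    apply Matrix.det_vandermonde_ne_zero_iff.2
    intro i j h
    simpa [Fin.ext_iff] using h
  refine ⟨Matrix.vecMul (fun j : Fin (k + 2) => if (j : ℕ) = 1 then (1 : ℝ) else 0) A⁻¹, fun j => ?_⟩
  have h : Matrix.vecMul (Matrix.vecMul (fun j : Fin (k+2) => if (j : ℕ) = 1 then (1:ℝ) else 0) A⁻¹) A
      = fun j : Fin (k + 2) => if (j : ℕ) = 1 then (1 : ℝ) else 0 := by
    rw [Matrix.vecMul_vecMul, Matrix.nonsing_inv_mul _ hA, Matrix.vecMul_one]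
  have := congrFun h j
  simpa [Matrix.vecMul, dotProduct, A, Matrix.vandermonde_apply] using this

/-- Finite difference representation of the directional derivative. -/
lemma fin_diff (k : ℕ) (v : ℂ) (hv : ‖v‖ = 1) {f : ℂ → ℂ} (hf : ContDiff ℝ (⊤ : ℕ∞) f) :
    ∃ (w : Fin (k + 2) → ℝ) (M : ℝ), ∀ z : ℂ, ‖z‖ ≤ 1 → ∀ h : ℝ, 0 ≤ h → h ≤ 1 →
      ‖∑ i, w i • f (z + (i * h : ℝ) • v) - h • dirD v f z‖ ≤ M * h ^ (k + 2) := by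
  obtain ⟨w, hw⟩ := weights k
  obtain ⟨M, hM⟩ := (isCompact_closedBall (0 : ℂ) (k + 3)).exists_bound_of_continuousOn
    (dirD_iter_contDiff v hf (k + 2)).continuous.continuousOn
  refine ⟨w, ∑ i : Fin (k + 2), |w i| * (M * (i : ℝ) ^ (k + 2) / (k + 1).factorial), ?_⟩
  intro z hz h h0 h1
  have hb : (0 : ℝ) < k + 2 := by positivity
  have hT : ∀ i : Fin (k + 2), ‖f (z + (i * h : ℝ) • v) -
      ∑ j : Fin (k + 2), (((j : ℕ).factorial : ℝ)⁻¹ * (i * h : ℝ) ^ (j : ℕ)) •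
        ((dirD v)^[j] f) z‖ ≤ M * (i * h : ℝ) ^ (k + 2) / (k + 1).factorial := by
    intro i
    have hi : ((i : ℕ) : ℝ) ≤ k + 2 := by exact_mod_cast i.2.le
    have hx : (i * h : ℝ) ∈ Set.Icc (0 : ℝ) (k + 2) := by
      constructor
      · positivity
      · nlinarith [Nat.cast_nonneg (α := ℝ) (i : ℕ)]
    have key := taylor_mean_remainder_bound (f := fun t : ℝ => f (z + t • v)) (n := k + 1)
      (C := M) hb.le (x := (i * h : ℝ)) ?_ hx ?_
    · rw [taylor_within_apply, Finset.sum_range] at key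
      simp only [sub_zero] at key
      refine le_trans (le_of_eq ?_) key
      congr 2
      apply Finset.sum_congr rfl
      intro j _
      rw [line_iter v z hf _ hb _ 0 (by constructor <;> simp [hb.le])]
      simp
    · apply ContDiff.contDiffOn
      have : ContDiff ℝ (⊤ : ℕ∞) (fun t : ℝ => f (z + t • v)) :=
        hf.comp (contDiff_const.add (contDiff_id.smul contDiff_const))
      exact this.of_le (by exact_mod_cast le_top)
    · intro y hy
      rw [line_iter v z hf _ hb _ y hy]
      apply hM
      rw [mem_closedBall_zero_iff]
      calc ‖z + y • v‖ ≤ ‖z‖ + ‖y • v‖ := norm_add_le _ _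
        _ = ‖z‖ + y := by rw [norm_smul, hv, Real.norm_of_nonneg hy.1, mul_one]
        _ ≤ k + 3 := by linarith [hy.2]
  have hsum : ∑ i : Fin (k + 2), w i • ∑ j : Fin (k + 2),
      (((j : ℕ).factorial : ℝ)⁻¹ * (i * h : ℝ) ^ (j : ℕ)) • ((dirD v)^[j] f) z
      = h • dirD v f z := by
    simp_rw [Finset.smul_sum]
    rw [Finset.sum_comm]
    have : ∀ j : Fin (k + 2), ∑ i : Fin (k + 2), w i •
        (((j : ℕ).factorial : ℝ)⁻¹ * (i * h : ℝ) ^ (j : ℕ)) • ((dirD v)^[j] f) z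
        = ((if (j : ℕ) = 1 then 1 else 0) * (((j : ℕ).factorial : ℝ)⁻¹ * h ^ (j : ℕ))) •
          ((dirD v)^[j] f) z := by
      intro j
      rw [← hw j, Finset.sum_mul, Finset.sum_smul]
      apply Finset.sum_congr rfl
      intro i _
      rw [smul_smul]
      congr 1
      rw [mul_pow]; ring
    simp_rw [this]
    rw [Finset.sum_eq_single (1 : Fin (k + 2))]
    · simp
    · intro j _ hj
      have : (j : ℕ) ≠ 1 := by
        intro hh; apply hj; ext; simpa using hh
      simp [this]
    · simp
  rw [← hsum, ← Finset.sum_sub_distrib, Finset.sum_mul]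
  refine (norm_sum_le _ _).trans (Finset.sum_le_sum fun i _ => ?_)
  rw [← smul_sub, norm_smul, Real.norm_eq_abs, mul_assoc]
  refine mul_le_mul_of_nonneg_left ((hT i).trans (le_of_eq ?_)) (abs_nonneg _)
  rw [mul_pow]; ring

lemma dirD_isBigO (k : ℕ) (v : ℂ) (hv : ‖v‖ = 1) {f : ℂ → ℂ} (hf : ContDiff ℝ (⊤ : ℕ∞) f)
    (hO : f =O[nhds 0] fun z : ℂ => ‖z‖ ^ (k + 1)) :
    dirD v f =O[nhds 0] fun z : ℂ => ‖z‖ ^ k := by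
  obtain ⟨w, M, hw⟩ := fin_diff k v hv hf
  obtain ⟨C, hC0, hC⟩ := hO.exists_pos
  rw [IsBigOWith, Metric.eventually_nhds_iff] at hC
  obtain ⟨δ, hδ, hC⟩ := hC
  set B : ℝ := |M| + ∑ i : Fin (k + 2), |w i| * (C * (k + 3) ^ (k + 1)) with hB
  set ε : ℝ := min 1 (δ / (k + 3)) with hε
  have hε0 : 0 < ε := by positivity
  have main : ∀ z : ℂ, z ≠ 0 → ‖z‖ < ε → ‖dirD v f z‖ ≤ B * ‖z‖ ^ k := by
    intro z hz0 hz
    have hz1 : ‖z‖ ≤ 1 := hz.le.trans (min_le_left _ _)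
    have hzδ : (k + 3) * ‖z‖ < δ := by
      have := hz.trans_le (min_le_right _ _)
      rwa [lt_div_iff₀ (by positivity), mul_comm] at this
    have hzp : 0 < ‖z‖ := norm_pos_iff.2 hz0
    have h := hw z hz1 ‖z‖ hzp.le hz1
    have hf' : ∀ i : Fin (k + 2), ‖w i • f (z + (i * ‖z‖ : ℝ) • v)‖
        ≤ |w i| * (C * (k + 3) ^ (k + 1)) * ‖z‖ ^ (k + 1) := by
      intro i
      have hi : ((i : ℕ) : ℝ) ≤ k + 2 := by exact_mod_cast i.2.le
      have hn : ‖z + (i * ‖z‖ : ℝ) • v‖ ≤ (k + 3) * ‖z‖ := by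
        refine (norm_add_le _ _).trans ?_
        rw [norm_smul, hv, Real.norm_of_nonneg (by positivity)]
        nlinarith
      have := hC (y := z + (i * ‖z‖ : ℝ) • v) (by rw [dist_zero_right]; linarith)
      rw [norm_smul, Real.norm_eq_abs, mul_assoc]
      refine mul_le_mul_of_nonneg_left (this.trans ?_) (abs_nonneg _)
      rw [norm_pow, norm_norm, mul_assoc, ← mul_pow]
      gcongr
    have h2 : ‖z‖ * ‖dirD v f z‖ ≤ ‖z‖ * (B * ‖z‖ ^ k) := by
      calc ‖z‖ * ‖dirD v f z‖ = ‖‖z‖ • dirD v f z‖ := by rw [norm_smul, norm_norm]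
        _ ≤ ‖∑ i, w i • f (z + (i * ‖z‖ : ℝ) • v)‖ +
            ‖∑ i, w i • f (z + (i * ‖z‖ : ℝ) • v) - ‖z‖ • dirD v f z‖ := by
              have := norm_sub_le (∑ i, w i • f (z + (i * ‖z‖ : ℝ) • v))
                (∑ i, w i • f (z + (i * ‖z‖ : ℝ) • v) - ‖z‖ • dirD v f z)
              rwa [sub_sub_cancel] at this
        _ ≤ (∑ i : Fin (k + 2), |w i| * (C * (k + 3) ^ (k + 1))) * ‖z‖ ^ (k + 1)
            + |M| * ‖z‖ ^ (k + 1) := by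
              apply add_le_add
              · rw [Finset.sum_mul]
                exact (norm_sum_le _ _).trans (Finset.sum_le_sum fun i _ => hf' i)
              · refine h.trans ?_
                refine mul_le_mul (le_abs_self _) ?_ (by positivity) (abs_nonneg _)
                exact pow_le_pow_of_le_one hzp.le hz1 (by omega)
        _ = ‖z‖ * (B * ‖z‖ ^ k) := by rw [hB]; ring
    exact le_of_mul_le_mul_left h2 hzp
  apply IsBigO.of_bound B
  have hev : ∀ᶠ z : ℂ in nhds 0, ‖z‖ < ε := by
    filter_upwards [Metric.ball_mem_nhds (0 : ℂ) hε0] with z hz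
    simpa using hz
  filter_upwards [hev] with z hz
  rw [norm_pow, norm_norm]
  by_cases hz0 : z = 0
  · subst hz0
    have c1 : Tendsto (fun z => ‖dirD v f z‖) (nhdsWithin 0 {0}ᶜ) (nhds ‖dirD v f 0‖) :=
      ((dirD_contDiff v hf).continuous.norm.tendsto 0).mono_left nhdsWithin_le_nhds
    have c2 : Tendsto (fun z : ℂ => B * ‖z‖ ^ k) (nhdsWithin 0 {0}ᶜ)
        (nhds (B * ‖(0 : ℂ)‖ ^ k)) :=
      ((by fun_prop : Continuous fun z : ℂ => B * ‖z‖ ^ k).tendsto 0).mono_left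
        nhdsWithin_le_nhds
    refine le_of_tendsto_of_tendsto c1 c2 ?_
    filter_upwards [self_mem_nhdsWithin, nhdsWithin_le_nhds hev] with y hy hy2
    exact main y hy hy2
  · exact main z hz0 hz

lemma dirD_comm (v w : ℂ) {f : ℂ → ℂ} (hf : ContDiff ℝ (⊤ : ℕ∞) f) (z : ℂ) :
    dirD v (dirD w f) z = dirD w (dirD v f) z := by
  have hd : DifferentiableAt ℝ (fderiv ℝ f) z :=
    (hf.fderiv_right (m := (⊤ : ℕ∞)) (by simp)).differentiable (by simp) z
  have e : ∀ a b : ℂ, dirD a (dirD b f) z = fderiv ℝ (fderiv ℝ f) z a b := by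
    intro a b
    unfold dirD
    rw [fderiv_clm_apply hd (differentiableAt_const b)]
    simp
  rw [e, e]
  exact (hf.contDiffAt.isSymmSndFDerivAt (by simp only [minSmoothness_of_isRCLikeNormedField]; exact WithTop.coe_le_coe.2 le_top)) v w

lemma main_smooth (k : ℕ) : ∀ f : ℂ → ℂ, ContDiff ℝ (⊤ : ℕ∞) f →
    (f =O[nhds 0] fun z : ℂ => ‖z‖ ^ k) →
    ((fun z => dirD 1 f z + Complex.I * dirD Complex.I f z) =O[nhds 0] fun z : ℂ => ‖z‖ ^ k) →
    ∃ a : ℂ, (fun z : ℂ => f z - a * z ^ k) =O[nhds 0] fun z : ℂ => ‖z‖ ^ (k + 1) := by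
  induction k with
  | zero =>
    intro f hf _ _
    refine ⟨f 0, ?_⟩
    have := (hf.differentiable (by simp) 0).isBigO_sub
    simpa using this.norm_right
  | succ k ih =>
    intro f hf hO hE
    have hg := dirD_contDiff 1 hf
    have hh := dirD_contDiff Complex.I hf
    have hEs : ContDiff ℝ (⊤ : ℕ∞) (fun z => dirD 1 f z + Complex.I * dirD Complex.I f z) :=
      hg.add (contDiff_const.mul hh)
    obtain ⟨a, ha⟩ := ih (dirD 1 f) hg (dirD_isBigO k 1 (by simp) hf hO) (by
      have := dirD_isBigO k 1 (by simp) hEs hE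
      refine this.congr_left fun z => ?_
      rw [dirD_comm Complex.I 1 hf]
      unfold dirD
      have h1 : DifferentiableAt ℝ (dirD 1 f) z := hg.differentiable (by simp) z
      have h2 : DifferentiableAt ℝ (dirD Complex.I f) z := hh.differentiable (by simp) z
      unfold dirD at h1 h2
      rw [fderiv_fun_add h1 (h2.const_mul _), fderiv_const_mul h2]
      simp)
    refine ⟨a / (k + 1), ?_⟩
    obtain ⟨C1, hC1, h1⟩ := ha.exists_pos
    obtain ⟨C2, hC2, h2⟩ := hE.exists_pos
    rw [IsBigOWith] at h1 h2
    obtain ⟨δ, hδ, hb⟩ := Metric.eventually_nhds_iff.1 (h1.and h2)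
    have f0 : f 0 = 0 := by
      have := hO.eq_zero_imp.self_of_nhds
      exact this (by simp)
    apply IsBigO.of_bound (C1 + C2)
    filter_upwards [Metric.ball_mem_nhds (0 : ℂ) hδ] with z hz
    rw [mem_ball_zero_iff] at hz
    have hder : ∀ y : ℂ, HasFDerivAt (fun z : ℂ => f z - a / (k + 1) * z ^ (k + 1))
        (fderiv ℝ f y - ((a * y ^ k) • (ContinuousLinearMap.id ℂ ℂ)).restrictScalars ℝ) y := by
      intro y
      refine ((hf.differentiable (by simp) y).hasFDerivAt).sub ?_
      have : HasDerivAt (fun z : ℂ => a / (k + 1) * z ^ (k + 1)) (a * y ^ k) y := by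
        have h4 := (hasDerivAt_pow (k + 1) y).const_mul (a / (k + 1) : ℂ)
        have : (k + 1 : ℂ) ≠ 0 := by exact_mod_cast Nat.succ_ne_zero k
        push_cast at h4
        rw [← mul_assoc, div_mul_cancel₀ _ this] at h4
        exact h4
      have h3 := this.hasFDerivAt.restrictScalars ℝ
      convert h3 using 1
      ext x <;> simp [mul_comm]
    have hbd : ∀ y ∈ Metric.closedBall (0 : ℂ) ‖z‖, ‖fderiv ℝ f y -
        ((a * y ^ k) • (ContinuousLinearMap.id ℂ ℂ)).restrictScalars ℝ‖
        ≤ (C1 + C2) * ‖z‖ ^ (k + 1) := by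
      intro y hy
      rw [mem_closedBall_zero_iff] at hy
      obtain ⟨b1, b2⟩ := hb (y := y) (by rw [dist_zero_right]; linarith)
      rw [norm_pow, norm_norm] at b1 b2
      have hp : ‖y‖ ^ (k + 1) ≤ ‖z‖ ^ (k + 1) := by gcongr
      refine ContinuousLinearMap.opNorm_le_bound _ (by positivity) fun v => ?_
      have e : (fderiv ℝ f y -
          ((a * y ^ k) • (ContinuousLinearMap.id ℂ ℂ)).restrictScalars ℝ) v
          = v * (dirD 1 f y - a * y ^ k) - v.im * Complex.I *
            (dirD 1 f y + Complex.I * dirD Complex.I f y) := by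
        have ev : fderiv ℝ f y v = v.re * dirD 1 f y + v.im * dirD Complex.I f y := by
          have : v = v.re • (1 : ℂ) + v.im • Complex.I := by simp
          conv_lhs => rw [this, map_add, map_smul, map_smul]
          simp [dirD]
        simp only [sub_apply, ContinuousLinearMap.coe_restrictScalars',
          smul_apply, ContinuousLinearMap.id_apply, smul_eq_mul]
        rw [ev]
        have hv := Complex.re_add_im v
        linear_combination (dirD 1 f y) * hv + v.im * dirD Complex.I f y * Complex.I_sq
      rw [e]
      calc _ ≤ ‖v‖ * ‖dirD 1 f y - a * y ^ k‖ + ‖v‖ *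
            ‖dirD 1 f y + Complex.I * dirD Complex.I f y‖ := by
            refine (norm_sub_le _ _).trans ?_
            rw [norm_mul, norm_mul, norm_mul, Complex.norm_I, mul_one, Complex.norm_real]
            gcongr
            exact Complex.abs_im_le_norm v
        _ ≤ ‖v‖ * (C1 * ‖z‖ ^ (k + 1)) + ‖v‖ * (C2 * ‖z‖ ^ (k + 1)) := by
            gcongr
            · exact b1.trans (by gcongr)
            · exact b2.trans (by gcongr)
        _ = _ := by ring
    have := (convex_closedBall (0 : ℂ) ‖z‖).norm_image_sub_le_of_norm_hasFDerivWithin_le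
      (fun y _ => (hder y).hasFDerivWithinAt) hbd (x := 0) (y := z) (by simp) (by simp)
    simp only [f0, sub_zero, ne_eq, Nat.succ_ne_zero, not_false_eq_true, zero_pow, mul_zero] at this
    rw [norm_pow, norm_norm, pow_succ _ (k + 1), ← mul_assoc]
    exact this

lemma exists_global (U : Set ℂ) (hU : IsOpen U) (h0 : (0 : ℂ) ∈ U)
    (f : ℂ → ℂ) (hf : ContDiffOn ℝ (⊤ : ℕ∞) f U) :
    ∃ g : ℂ → ℂ, ContDiff ℝ (⊤ : ℕ∞) g ∧ g =ᶠ[nhds 0] f := by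
  obtain ⟨r, hr, hrU⟩ := Metric.isOpen_iff.1 hU 0 h0
  let b : ContDiffBump (0 : ℂ) := ⟨r / 4, r / 2, by positivity, by linarith⟩
  refine ⟨fun z => b z • f z, ?_, ?_⟩
  · rw [contDiff_iff_contDiffAt]
    intro z
    by_cases hz : z ∈ U
    · exact b.contDiff.contDiffAt.smul (hf.contDiffAt (hU.mem_nhds hz))
    · have hz' : z ∉ tsupport b := by
        rw [b.tsupport_eq]
        intro h
        refine hz (hrU (Metric.closedBall_subset_ball ?_ h))
        show r / 2 < r
        linarith
      have : (fun z => b z • f z) =ᶠ[nhds z] fun _ => 0 := by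
        filter_upwards [notMem_tsupport_iff_eventuallyEq.1 hz'] with y hy
        simp [hy]
      exact contDiffAt_const.congr_of_eventuallyEq this
  · filter_upwards [b.eventuallyEq_one] with z hz
    simp [hz]

/-- The key local step in Lemma 2.3: if a smooth `f` on a neighbourhood of `0 ∈ ℂ`
satisfies `f(z) = O(|z|^k)` and `∂_z̄ f(z) = O(|z|^k)` as `z → 0`, then the lowest-order
homogeneous part of `f` at `0` is a holomorphic monomial: there is `a ∈ ℂ` with
`f(z) - a z^k = O(|z|^{k+1})`. -/
theorem lowest_order_term_is_holomorphic_monomial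
    (U : Set ℂ) (hU : IsOpen U) (h0 : (0 : ℂ) ∈ U)
    (f : ℂ → ℂ) (hf : ContDiffOn ℝ (⊤ : ℕ∞) f U) (k : ℕ)
    (hfO : f =O[nhds 0] fun z : ℂ => ‖z‖ ^ k)
    (hdO : (fun z => wirtZbar f z) =O[nhds 0] fun z : ℂ => ‖z‖ ^ k) :
    ∃ a : ℂ, (fun z : ℂ => f z - a * z ^ k) =O[nhds 0] fun z : ℂ => ‖z‖ ^ (k + 1) := by
  obtain ⟨g, hg, hgf⟩ := exists_global U hU h0 f hf
  obtain ⟨a, ha⟩ := main_smooth k g hg (hgf.trans_isBigO hfO) (by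
    refine EventuallyEq.trans_isBigO ?_ (hdO.const_mul_left 2)
    filter_upwards [hgf.eventuallyEq_nhds] with z hz
    simp only [dirD, wirtZbar, hz.fderiv_eq, smul_eq_mul]
    ring)
  refine ⟨a, EventuallyEq.trans_isBigO ?_ ha⟩
  filter_upwards [hgf] with z hz
  rw [hz]
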